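/- arXiv:1402.6279 — 2 statements merged into one kernel-verified Lean document; each statement's English description precedes it below -/
import Mathlib

section
/- (Proposition: the second Bott–Chern form) In the Cholesky setting, Tr(𝚯²) = ∂̄∂ Tr(2θ₂θ̄₁ + θ₂θ̄₂); equivalently, the second Chern character form ch₂ = (1/2)Tr(𝚯²) satisfies ch₂ = ∂̄∂ bc₂ with bc₂ = (1/2)Tr(2θ₂θ̄₁ + θ₂θ̄₂). -/
/-- An abstract model of the Dolbeault double complex of `(p,q)`-forms on a complex
manifold: a bigraded associative `ℂ`-algebra `Ω = ⨁ Ω^{p,q}`, graded-commutative with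
respect to total degree, with `ℂ`-linear operators `∂` (`pd`) and `∂̄` (`pdb`) of
bidegrees `(1,0)` and `(0,1)`, squaring to zero and anticommuting, satisfying the
graded Leibniz rule. -/
structure DolbeaultAlgebra (Ω : Type*) [Ring Ω] [Algebra ℂ Ω] where
  /-- the `ℂ`-subspace of elements of bidegree `(p,q)` -/
  deg : ℕ → ℕ → Submodule ℂ Ω
  one_mem : (1 : Ω) ∈ deg 0 0
  mul_mem : ∀ {p q p' q'} {a b : Ω}, a ∈ deg p q → b ∈ deg p' q' →
    a * b ∈ deg (p + p') (q + q')
  gcomm : ∀ {p q p' q'} (a b : Ω), a ∈ deg p q → b ∈ deg p' q' →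
    a * b = ((-1 : ℂ) ^ ((p + q) * (p' + q'))) • (b * a)
  /-- the operator `∂` -/
  pd : Ω →ₗ[ℂ] Ω
  /-- the operator `∂̄` -/
  pdb : Ω →ₗ[ℂ] Ω
  pd_mem : ∀ {p q} {a : Ω}, a ∈ deg p q → pd a ∈ deg (p + 1) q
  pdb_mem : ∀ {p q} {a : Ω}, a ∈ deg p q → pdb a ∈ deg p (q + 1)
  pd_pd : ∀ a : Ω, pd (pd a) = 0
  pdb_pdb : ∀ a : Ω, pdb (pdb a) = 0
  pd_pdb : ∀ a : Ω, pd (pdb a) + pdb (pd a) = 0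
  pd_leibniz : ∀ {p q} (a b : Ω), a ∈ deg p q →
    pd (a * b) = pd a * b + ((-1 : ℂ) ^ (p + q)) • (a * pd b)
  pdb_leibniz : ∀ {p q} (a b : Ω), a ∈ deg p q →
    pdb (a * b) = pdb a * b + ((-1 : ℂ) ^ (p + q)) • (a * pdb b)

namespace DolbeaultAlgebra

variable {Ω : Type*} [Ring Ω] [Algebra ℂ Ω] {r : ℕ}

/-- the entrywise extension of `∂` to `r × r` matrices over `Ω` -/
def mpd (A : DolbeaultAlgebra Ω) (M : Matrix (Fin r) (Fin r) Ω) :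
    Matrix (Fin r) (Fin r) Ω := M.map A.pd

/-- the entrywise extension of `∂̄` to `r × r` matrices over `Ω` -/
def mpdb (A : DolbeaultAlgebra Ω) (M : Matrix (Fin r) (Fin r) Ω) :
    Matrix (Fin r) (Fin r) Ω := M.map A.pdb

/-- the assertion that all entries of a matrix lie in `Ω^{p,q}` -/
def MatDeg (A : DolbeaultAlgebra Ω) (p q : ℕ) (M : Matrix (Fin r) (Fin r) Ω) : Prop :=
  ∀ i j, M i j ∈ A.deg p q

end DolbeaultAlgebra

variable {Ω : Type*} [Ring Ω] [Algebra ℂ Ω]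

namespace DolbeaultAlgebra

section helpers

variable {r : ℕ} (A : DolbeaultAlgebra Ω)

theorem MatDeg.mul {A : DolbeaultAlgebra Ω} {p q p' q' : ℕ} {M N : Matrix (Fin r) (Fin r) Ω}
    (hM : A.MatDeg p q M) (hN : A.MatDeg p' q' N) : A.MatDeg (p + p') (q + q') (M * N) := by
  intro i j
  rw [Matrix.mul_apply]
  exact Submodule.sum_mem _ fun k _ => A.mul_mem (hM i k) (hN k j)

theorem MatDeg.mpd {A : DolbeaultAlgebra Ω} {p q : ℕ} {M : Matrix (Fin r) (Fin r) Ω}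
    (hM : A.MatDeg p q M) : A.MatDeg (p + 1) q (A.mpd M) := fun i j => A.pd_mem (hM i j)

theorem MatDeg.mpdb {A : DolbeaultAlgebra Ω} {p q : ℕ} {M : Matrix (Fin r) (Fin r) Ω}
    (hM : A.MatDeg p q M) : A.MatDeg p (q + 1) (A.mpdb M) := fun i j => A.pdb_mem (hM i j)

theorem mpd_add (M N : Matrix (Fin r) (Fin r) Ω) : A.mpd (M + N) = A.mpd M + A.mpd N := by
  ext i j; simp [DolbeaultAlgebra.mpd]

theorem mpdb_add (M N : Matrix (Fin r) (Fin r) Ω) : A.mpdb (M + N) = A.mpdb M + A.mpdb N := by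
  ext i j; simp [DolbeaultAlgebra.mpdb]

theorem mpd_neg (M : Matrix (Fin r) (Fin r) Ω) : A.mpd (-M) = -A.mpd M := by
  ext i j; simp [DolbeaultAlgebra.mpd]

theorem mpdb_neg (M : Matrix (Fin r) (Fin r) Ω) : A.mpdb (-M) = -A.mpdb M := by
  ext i j; simp [DolbeaultAlgebra.mpdb]

theorem mpd_mpd (M : Matrix (Fin r) (Fin r) Ω) : A.mpd (A.mpd M) = 0 := by
  ext i j; simp [DolbeaultAlgebra.mpd, A.pd_pd]

theorem mpdb_mpdb (M : Matrix (Fin r) (Fin r) Ω) : A.mpdb (A.mpdb M) = 0 := by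
  ext i j; simp [DolbeaultAlgebra.mpdb, A.pdb_pdb]

theorem mpd_mpdb (M : Matrix (Fin r) (Fin r) Ω) : A.mpd (A.mpdb M) = -A.mpdb (A.mpd M) := by
  ext i j
  simpa [DolbeaultAlgebra.mpd, DolbeaultAlgebra.mpdb] using
    eq_neg_of_add_eq_zero_left (A.pd_pdb (M i j))

theorem pd_trace (M : Matrix (Fin r) (Fin r) Ω) : A.pd M.trace = (A.mpd M).trace := by
  simp [Matrix.trace, DolbeaultAlgebra.mpd]

theorem pdb_trace (M : Matrix (Fin r) (Fin r) Ω) : A.pdb M.trace = (A.mpdb M).trace := by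
  simp [Matrix.trace, DolbeaultAlgebra.mpdb]

theorem mpd_mul_even {p q : ℕ} {M : Matrix (Fin r) (Fin r) Ω} (hM : A.MatDeg p q M)
    (he : Even (p + q)) (N : Matrix (Fin r) (Fin r) Ω) :
    A.mpd (M * N) = A.mpd M * N + M * A.mpd N := by
  ext i j
  simp only [DolbeaultAlgebra.mpd, Matrix.map_apply, Matrix.mul_apply, Matrix.add_apply, map_sum]
  rw [← Finset.sum_add_distrib]
  refine Finset.sum_congr rfl fun k _ => ?_
  rw [A.pd_leibniz _ _ (hM i k), he.neg_one_pow, one_smul]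

theorem mpd_mul_odd {p q : ℕ} {M : Matrix (Fin r) (Fin r) Ω} (hM : A.MatDeg p q M)
    (he : Odd (p + q)) (N : Matrix (Fin r) (Fin r) Ω) :
    A.mpd (M * N) = A.mpd M * N - M * A.mpd N := by
  ext i j
  simp only [DolbeaultAlgebra.mpd, Matrix.map_apply, Matrix.mul_apply, Matrix.sub_apply, map_sum]
  rw [← Finset.sum_sub_distrib]
  refine Finset.sum_congr rfl fun k _ => ?_
  rw [A.pd_leibniz _ _ (hM i k), he.neg_one_pow, neg_one_smul, sub_eq_add_neg]

theorem mpdb_mul_even {p q : ℕ} {M : Matrix (Fin r) (Fin r) Ω} (hM : A.MatDeg p q M)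
    (he : Even (p + q)) (N : Matrix (Fin r) (Fin r) Ω) :
    A.mpdb (M * N) = A.mpdb M * N + M * A.mpdb N := by
  ext i j
  simp only [DolbeaultAlgebra.mpdb, Matrix.map_apply, Matrix.mul_apply, Matrix.add_apply, map_sum]
  rw [← Finset.sum_add_distrib]
  refine Finset.sum_congr rfl fun k _ => ?_
  rw [A.pdb_leibniz _ _ (hM i k), he.neg_one_pow, one_smul]

theorem mpdb_mul_odd {p q : ℕ} {M : Matrix (Fin r) (Fin r) Ω} (hM : A.MatDeg p q M)
    (he : Odd (p + q)) (N : Matrix (Fin r) (Fin r) Ω) :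
    A.mpdb (M * N) = A.mpdb M * N - M * A.mpdb N := by
  ext i j
  simp only [DolbeaultAlgebra.mpdb, Matrix.map_apply, Matrix.mul_apply, Matrix.sub_apply, map_sum]
  rw [← Finset.sum_sub_distrib]
  refine Finset.sum_congr rfl fun k _ => ?_
  rw [A.pdb_leibniz _ _ (hM i k), he.neg_one_pow, neg_one_smul, sub_eq_add_neg]

theorem trace_even {p q p' q' : ℕ} {M N : Matrix (Fin r) (Fin r) Ω} (hM : A.MatDeg p q M)
    (hN : A.MatDeg p' q' N) (he : Even ((p + q) * (p' + q'))) :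
    (M * N).trace = (N * M).trace := by
  simp only [Matrix.trace, Matrix.diag_apply, Matrix.mul_apply]
  rw [Finset.sum_comm]
  refine Finset.sum_congr rfl fun i _ => Finset.sum_congr rfl fun j _ => ?_
  rw [A.gcomm _ _ (hM j i) (hN i j), he.neg_one_pow, one_smul]

theorem trace_odd {p q p' q' : ℕ} {M N : Matrix (Fin r) (Fin r) Ω} (hM : A.MatDeg p q M)
    (hN : A.MatDeg p' q' N) (he : Odd ((p + q) * (p' + q'))) :
    (M * N).trace = -(N * M).trace := by
  simp only [Matrix.trace, Matrix.diag_apply, Matrix.mul_apply]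
  rw [Finset.sum_comm, ← Finset.sum_neg_distrib]
  refine Finset.sum_congr rfl fun i _ => ?_
  rw [← Finset.sum_neg_distrib]
  refine Finset.sum_congr rfl fun j _ => ?_
  rw [A.gcomm _ _ (hM j i) (hN i j), he.neg_one_pow, neg_one_smul]

theorem pd_one : A.pd 1 = 0 := by
  have h := A.pd_leibniz 1 1 A.one_mem
  simpa using h

theorem pdb_one : A.pdb 1 = 0 := by
  have h := A.pdb_leibniz 1 1 A.one_mem
  simpa using h

theorem mpd_one : A.mpd (1 : Matrix (Fin r) (Fin r) Ω) = 0 := by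
  ext i j
  by_cases h : i = j <;> simp [DolbeaultAlgebra.mpd, Matrix.one_apply, h, A.pd_one]

theorem mpdb_one : A.mpdb (1 : Matrix (Fin r) (Fin r) Ω) = 0 := by
  ext i j
  by_cases h : i = j <;> simp [DolbeaultAlgebra.mpdb, Matrix.one_apply, h, A.pdb_one]

theorem mpd_inv {b binv : Matrix (Fin r) (Fin r) Ω} (hd : A.MatDeg 0 0 binv)
    (hl : binv * b = 1) (hr : b * binv = 1) :
    A.mpd binv = -(binv * A.mpd b * binv) := by
  have h := A.mpd_mul_even hd (by simp) b
  rw [hl, mpd_one] at h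
  have h2 : A.mpd binv * b = -(binv * A.mpd b) := eq_neg_of_add_eq_zero_left h.symm
  calc A.mpd binv = A.mpd binv * b * binv := by rw [mul_assoc, hr, mul_one]
    _ = _ := by rw [h2, neg_mul]

theorem mpdb_inv {b binv : Matrix (Fin r) (Fin r) Ω} (hd : A.MatDeg 0 0 binv)
    (hl : binv * b = 1) (hr : b * binv = 1) :
    A.mpdb binv = -(binv * A.mpdb b * binv) := by
  have h := A.mpdb_mul_even hd (by simp) b
  rw [hl, mpdb_one] at h
  have h2 : A.mpdb binv * b = -(binv * A.mpdb b) := eq_neg_of_add_eq_zero_left h.symm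
  calc A.mpdb binv = A.mpdb binv * b * binv := by rw [mul_assoc, hr, mul_one]
    _ = _ := by rw [h2, neg_mul]

theorem upper_inv {b binv : Matrix (Fin r) (Fin r) Ω}
    (hbu : ∀ i j : Fin r, j < i → b i j = 0) (hbd : ∀ i : Fin r, b i i = 1)
    (hr : b * binv = 1) : ∀ i j : Fin r, j < i → binv i j = 0 := by
  intro i
  induction i using WellFoundedGT.induction with
  | ind i ih =>
    intro j hj
    have h := congrFun (congrFun hr i) j
    rw [Matrix.mul_apply, Matrix.one_apply_ne hj.ne', Finset.sum_eq_single i, hbd, one_mul] at h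
    · exact h
    · intro k _ hk
      rcases lt_or_gt_of_ne hk with hk | hk
      · rw [hbu i k hk, zero_mul]
      · rw [ih k hk j (hj.trans hk), mul_zero]
    · simp

theorem lower_inv {c cinv : Matrix (Fin r) (Fin r) Ω}
    (hc : A.MatDeg 0 0 c) (hci : A.MatDeg 0 0 cinv)
    (hcl : ∀ i j : Fin r, i < j → c i j = 0)
    (hr : c * cinv = 1) : ∀ i j : Fin r, i < j → cinv i j = 0 := by
  intro i
  induction i using WellFoundedLT.induction with
  | ind i ih =>
    have key : ∀ j, i ≤ j → c i i * cinv i j = (1 : Matrix (Fin r) (Fin r) Ω) i j := by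
      intro j hj
      have h := congrFun (congrFun hr i) j
      rw [Matrix.mul_apply, Finset.sum_eq_single i] at h
      · exact h
      · intro k _ hk
        rcases lt_or_gt_of_ne hk with hk | hk
        · rw [ih k hk j (hk.trans_le hj), mul_zero]
        · rw [hcl i k hk, zero_mul]
      · simp
    intro j hj
    have h1 := key i le_rfl
    have h2 := key j hj.le
    rw [Matrix.one_apply_eq] at h1
    rw [Matrix.one_apply_ne hj.ne] at h2
    rw [A.gcomm _ _ (hc i i) (hci i i)] at h1
    simp only [add_zero, mul_zero, pow_zero, one_smul] at h1
    rw [← one_mul (cinv i j), ← h1, mul_assoc, h2, mul_zero]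

theorem lower_mul {M N : Matrix (Fin r) (Fin r) Ω}
    (hM : ∀ i j : Fin r, i < j → M i j = 0) (hN : ∀ i j : Fin r, i < j → N i j = 0) :
    (∀ i j : Fin r, i < j → (M * N) i j = 0) ∧ ∀ i, (M * N) i i = M i i * N i i := by
  constructor
  · intro i j hij
    rw [Matrix.mul_apply]
    refine Finset.sum_eq_zero fun k _ => ?_
    rcases lt_or_ge i k with hk | hk
    · rw [hM i k hk, zero_mul]
    · rw [hN k j (hk.trans_lt hij), mul_zero]
  · intro i
    rw [Matrix.mul_apply]
    refine Finset.sum_eq_single i (fun k _ hk => ?_) (by simp)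
    rcases lt_or_gt_of_ne hk with hk | hk
    · rw [hN k i hk, mul_zero]
    · rw [hM i k hk, zero_mul]

theorem supper_mul {M N : Matrix (Fin r) (Fin r) Ω}
    (hM : ∀ i j : Fin r, j ≤ i → M i j = 0) (hN : ∀ i j : Fin r, j < i → N i j = 0) :
    ∀ i j : Fin r, j ≤ i → (M * N) i j = 0 := by
  intro i j hij
  rw [Matrix.mul_apply]
  refine Finset.sum_eq_zero fun k _ => ?_
  rcases le_or_gt k i with hk | hk
  · rw [hM i k hk, zero_mul]
  · rw [hN k j (hij.trans_lt hk), mul_zero]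

theorem odd_sq {p q : ℕ} {x : Ω} (hx : x ∈ A.deg p q) (ho : Odd (p + q)) : x * x = 0 := by
  have h := A.gcomm x x hx hx
  rw [(ho.mul ho).neg_one_pow, neg_one_smul] at h
  have h2 : (2 : ℂ) • (x * x) = 0 := by
    rw [two_smul]; nth_rewrite 1 [h]; simp
  simpa using h2

end helpers

end DolbeaultAlgebra

/-- (Proposition: the second Bott–Chern form) In the Cholesky setting,
`Tr(BΘ²) = ∂̄∂Tr(2θ₂θ̄₁ + θ₂θ̄₂)`; equivalently, `ch₂ = (1/2)Tr(BΘ²)` satisfies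
`ch₂ = ∂̄∂bc₂` with `bc₂ = (1/2)Tr(2θ₂θ̄₁ + θ₂θ̄₂)`. -/
theorem stmt16
    (A : DolbeaultAlgebra Ω) (r : ℕ) (hr : 1 ≤ r)
    (b c binv cinv : Matrix (Fin r) (Fin r) Ω)
    (hbdeg : A.MatDeg 0 0 b) (hcdeg : A.MatDeg 0 0 c)
    (hbinvdeg : A.MatDeg 0 0 binv) (hcinvdeg : A.MatDeg 0 0 cinv)
    (hbu : ∀ i j : Fin r, j < i → b i j = 0) (hbd : ∀ i : Fin r, b i i = 1)
    (hcl : ∀ i j : Fin r, i < j → c i j = 0)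
    (hbinvl : binv * b = 1) (hbinvr : b * binv = 1)
    (hcinvl : cinv * c = 1) (hcinvr : c * cinv = 1)
    (h hinv : Matrix (Fin r) (Fin r) Ω) (hh : h = c * b) (hhinv : hinv = binv * cinv)
    (θ₁ θ₂ θ θb₁ θb₂ θb : Matrix (Fin r) (Fin r) Ω)
    (hθ₁ : θ₁ = A.mpd b * binv) (hθ₂ : θ₂ = cinv * A.mpd c) (hθ : θ = θ₁ + θ₂)
    (hθb₁ : θb₁ = A.mpdb b * binv) (hθb₂ : θb₂ = cinv * A.mpdb c) (hθb : θb = θb₁ + θb₂)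
    (Bθ Bθb BΘ : Matrix (Fin r) (Fin r) Ω)
    (hBθ : Bθ = hinv * A.mpd h) (hBθb : Bθb = hinv * A.mpdb h) (hBΘ : BΘ = A.mpdb Bθ) :
    Matrix.trace (BΘ ^ 2) =
      A.pdb (A.pd (Matrix.trace ((2 : ℂ) • (θ₂ * θb₁) + θ₂ * θb₂))) ∧
    (1 / 2 : ℂ) • Matrix.trace (BΘ ^ 2) =
      A.pdb (A.pd ((1 / 2 : ℂ) • Matrix.trace ((2 : ℂ) • (θ₂ * θb₁) + θ₂ * θb₂))) := by
  have hb1 : A.MatDeg 0 1 θb₁ := by rw [hθb₁]; exact hbdeg.mpdb.mul hbinvdeg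
  have hb2 : A.MatDeg 0 1 θb₂ := by rw [hθb₂]; exact hcinvdeg.mul hcdeg.mpdb
  have h1 : A.MatDeg 1 0 θ₁ := by rw [hθ₁]; exact hbdeg.mpd.mul hbinvdeg
  have h2 : A.MatDeg 1 0 θ₂ := by rw [hθ₂]; exact hcinvdeg.mul hcdeg.mpd
  have dbinv := A.mpd_inv hbinvdeg hbinvl hbinvr
  have dbbinv := A.mpdb_inv hbinvdeg hbinvl hbinvr
  have dcinv := A.mpd_inv hcinvdeg hcinvl hcinvr
  have dbcinv := A.mpdb_inv hcinvdeg hcinvl hcinvr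
  obtain ⟨U, hU⟩ : ∃ U, U = -A.mpd θb₁ := ⟨_, rfl⟩
  obtain ⟨L, hL⟩ : ∃ L, L = A.mpdb θ₂ := ⟨_, rfl⟩
  have dU : A.MatDeg 1 1 U := by
    rw [hU]; exact fun i j => Submodule.neg_mem _ (hb1.mpd i j)
  have dL : A.MatDeg 1 1 L := by rw [hL]; exact h2.mpdb
  -- structure equations
  have e1 : A.mpd θ₂ = -(θ₂ * θ₂) := by
    rw [hθ₂, A.mpd_mul_even hcinvdeg (by simp), dcinv, A.mpd_mpd]
    noncomm_ring
  have e2 : A.mpd θb₂ = -L - θb₂ * θ₂ - θ₂ * θb₂ := by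
    rw [hL, hθb₂, hθ₂, A.mpd_mul_even hcinvdeg (by simp), dcinv, A.mpd_mpdb,
      A.mpdb_mul_even hcinvdeg (by simp), dbcinv]
    noncomm_ring
  have e3 : A.mpdb θb₁ = θb₁ * θb₁ := by
    rw [hθb₁, A.mpdb_mul_odd hbdeg.mpdb (by simp), dbbinv, A.mpdb_mpdb]
    noncomm_ring
  have e4 : A.mpdb θ₁ = U + θ₁ * θb₁ + θb₁ * θ₁ := by
    rw [hU, hθb₁, hθ₁, A.mpd_mul_odd hbdeg.mpdb (by simp), dbinv, A.mpd_mpdb,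
      A.mpdb_mul_odd hbdeg.mpd (by simp), dbbinv]
    noncomm_ring
  have e5 : A.mpdb U = θb₁ * U - U * θb₁ := by
    have : A.mpdb U = A.mpd (A.mpdb θb₁) := by rw [hU, A.mpdb_neg, A.mpd_mpdb]
    rw [this, e3, A.mpd_mul_odd hb1 (by simp), hU]
    noncomm_ring
  have e6 : A.mpdb L = 0 := by rw [hL, A.mpdb_mpdb]
  -- curvature
  obtain ⟨X, hX⟩ : ∃ X, X = U + L - (θb₁ * θ₂ + θ₂ * θb₁) := ⟨_, rfl⟩
  have hB : Bθ = binv * (θ * b) := by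
    rw [hBθ, hhinv, hh, hθ, hθ₁, hθ₂, A.mpd_mul_even hcdeg (by simp)]
    simp only [mul_add, add_mul, mul_assoc, hbinvl, mul_one]
    rw [← mul_assoc cinv c, hcinvl, one_mul, add_comm]
  have hθdeg : A.MatDeg 1 0 θ := by
    rw [hθ]; exact fun i j => Submodule.add_mem _ (h1 i j) (h2 i j)
  have hdb : A.mpdb b = θb₁ * b := by rw [hθb₁, mul_assoc, hbinvl, mul_one]
  have hdbi : A.mpdb binv = -(binv * θb₁) := by rw [dbbinv, hθb₁, mul_assoc]
  have hBX : BΘ = binv * X * b := by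
    rw [hBΘ, hB, A.mpdb_mul_even hbinvdeg (by simp), A.mpdb_mul_odd hθdeg (by simp), hdb, hdbi,
      hθ, A.mpdb_add, e4, ← hL, hX]
    noncomm_ring
  have dM : A.MatDeg 1 1 (θb₁ * θ₂ + θ₂ * θb₁) :=
    fun i j => Submodule.add_mem _ (hb1.mul h2 i j) (h2.mul hb1 i j)
  have dX : A.MatDeg 1 1 X := by
    rw [hX]
    exact fun i j => Submodule.sub_mem _ (Submodule.add_mem _ (dU i j) (dL i j)) (dM i j)
  have hT : Matrix.trace (BΘ ^ 2) = Matrix.trace (X * X) := by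
    have : BΘ ^ 2 = binv * (X * X * b) := by
      rw [hBX, pow_two]
      calc binv * X * b * (binv * X * b) = binv * X * (b * binv) * X * b := by noncomm_ring
        _ = _ := by rw [hbinvr]; noncomm_ring
    rw [this, A.trace_even hbinvdeg ((dX.mul dX).mul hbdeg) (by simp), mul_assoc, hbinvr, mul_one]
  -- triangularity
  have tbi := DolbeaultAlgebra.upper_inv hbu hbd hbinvr
  have tci := A.lower_inv hcdeg hcinvdeg hcl hcinvr
  have tb1 : ∀ i j : Fin r, j ≤ i → θb₁ i j = 0 := by
    rw [hθb₁]
    refine DolbeaultAlgebra.supper_mul ?_ tbi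
    intro i j hij
    rcases hij.lt_or_eq with hij | rfl
    · simp [DolbeaultAlgebra.mpdb, hbu i j hij]
    · simp [DolbeaultAlgebra.mpdb, hbd, A.pdb_one]
  have tU : ∀ i j : Fin r, j ≤ i → U i j = 0 := by
    intro i j hij
    simp [hU, DolbeaultAlgebra.mpd, tb1 i j hij]
  have trU : Matrix.trace (U * U) = 0 :=
    Finset.sum_eq_zero fun i _ =>
      DolbeaultAlgebra.supper_mul tU (fun i j hij => tU i j hij.le) i i le_rfl
  have t2 : ∀ i j : Fin r, i < j → θ₂ i j = 0 := by
    rw [hθ₂]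
    refine (DolbeaultAlgebra.lower_mul tci ?_).1
    intro i j hij
    simp [DolbeaultAlgebra.mpd, hcl i j hij]
  have tb2 : ∀ i j : Fin r, i < j → θb₂ i j = 0 := by
    rw [hθb₂]
    refine (DolbeaultAlgebra.lower_mul tci ?_).1
    intro i j hij
    simp [DolbeaultAlgebra.mpdb, hcl i j hij]
  have tr3 : Matrix.trace (θ₂ * θ₂ * θb₂) = 0 := by
    refine Finset.sum_eq_zero fun i _ => ?_
    have q := DolbeaultAlgebra.lower_mul t2 t2
    rw [Matrix.diag_apply, (DolbeaultAlgebra.lower_mul q.1 tb2).2, q.2,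
      A.odd_sq (h2 i i) (by simp), zero_mul]
  have trMid : Matrix.trace (θ₂ * θb₂ * θ₂) = 0 := by
    rw [A.trace_even (h2.mul hb2) h2 (by decide), ← mul_assoc, tr3]
  -- first derivative
  have d1 : A.pd (Matrix.trace (θ₂ * θb₁)) =
      Matrix.trace (θ₂ * U) - Matrix.trace (θ₂ * (θ₂ * θb₁)) := by
    have : A.mpd θb₁ = -U := by rw [hU, neg_neg]
    rw [A.pd_trace, A.mpd_mul_odd h2 (by simp), e1, this, ← Matrix.trace_sub]
    congr 1; noncomm_ring
  have d2 : A.pd (Matrix.trace (θ₂ * θb₂)) = Matrix.trace (θ₂ * L) := by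
    rw [A.pd_trace, A.mpd_mul_odd h2 (by simp), e1, e2]
    have : -(θ₂ * θ₂) * θb₂ - θ₂ * (-L - θb₂ * θ₂ - θ₂ * θb₂) = θ₂ * L + θ₂ * θb₂ * θ₂ := by
      noncomm_ring
    rw [this, Matrix.trace_add, trMid, add_zero]
  -- second derivative
  have c1 : Matrix.trace (U * L) = Matrix.trace (L * U) := A.trace_even dU dL (by decide)
  have c2 : Matrix.trace (θ₂ * U * θb₁) = -Matrix.trace (θb₁ * θ₂ * U) := by
    rw [A.trace_odd (h2.mul dU) hb1 (by decide), mul_assoc]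
  have c3 : Matrix.trace (θ₂ * L * θb₁) = -Matrix.trace (θb₁ * θ₂ * L) := by
    rw [A.trace_odd (h2.mul dL) hb1 (by decide), mul_assoc]
  have c4 : Matrix.trace (U * (θb₁ * θ₂ + θ₂ * θb₁)) =
      Matrix.trace (θb₁ * θ₂ * U) + Matrix.trace (θ₂ * θb₁ * U) := by
    rw [A.trace_even dU dM (by decide), add_mul, Matrix.trace_add]
  have c5 : Matrix.trace ((θb₁ * θ₂ + θ₂ * θb₁) * U) =
      Matrix.trace (θb₁ * θ₂ * U) + Matrix.trace (θ₂ * θb₁ * U) := by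
    rw [add_mul, Matrix.trace_add]
  have c6 : Matrix.trace ((θb₁ * θ₂ + θ₂ * θb₁) * L) =
      Matrix.trace (θb₁ * θ₂ * L) + Matrix.trace (L * (θ₂ * θb₁)) := by
    rw [add_mul, Matrix.trace_add, A.trace_even (h2.mul hb1) dL (by decide)]
  have c7 : Matrix.trace (L * (θb₁ * θ₂ + θ₂ * θb₁)) =
      Matrix.trace (θb₁ * θ₂ * L) + Matrix.trace (L * (θ₂ * θb₁)) := by
    rw [A.trace_even dL dM (by decide), c6]
  have c8 : Matrix.trace ((θb₁ * θ₂ + θ₂ * θb₁) * (θb₁ * θ₂ + θ₂ * θb₁)) =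
      -(Matrix.trace (θ₂ * θ₂ * (θb₁ * θb₁)) + Matrix.trace (θ₂ * θ₂ * (θb₁ * θb₁))) := by
    have a1 : Matrix.trace (θb₁ * (θ₂ * θb₁ * θ₂)) = -Matrix.trace (θ₂ * θb₁ * θ₂ * θb₁) :=
      A.trace_odd hb1 ((h2.mul hb1).mul h2) (by decide)
    have a2 : Matrix.trace (θb₁ * (θ₂ * θ₂ * θb₁)) = -Matrix.trace (θ₂ * θ₂ * θb₁ * θb₁) :=
      A.trace_odd hb1 ((h2.mul h2).mul hb1) (by decide)
    have a3 : Matrix.trace (θ₂ * θb₁ * θb₁ * θ₂) = -Matrix.trace (θ₂ * (θ₂ * θb₁ * θb₁)) :=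
      A.trace_odd ((h2.mul hb1).mul hb1) h2 (by decide)
    simp only [mul_add, add_mul, Matrix.trace_add, mul_assoc] at a1 a2 a3 ⊢
    rw [a1, a2, a3]
    abel
  have f1 : A.pdb (Matrix.trace (θ₂ * U)) = Matrix.trace (L * U) -
      (Matrix.trace (θb₁ * θ₂ * U) + Matrix.trace (θ₂ * θb₁ * U)) := by
    rw [A.pdb_trace, A.mpdb_mul_odd h2 (by simp), ← hL, e5]
    have : L * U - θ₂ * (θb₁ * U - U * θb₁) = L * U - θ₂ * θb₁ * U + θ₂ * U * θb₁ := by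
      noncomm_ring
    rw [this, Matrix.trace_add, Matrix.trace_sub, c2]
    abel
  have f2 : A.pdb (Matrix.trace (θ₂ * (θ₂ * θb₁))) =
      Matrix.trace (L * (θ₂ * θb₁)) + Matrix.trace (θb₁ * θ₂ * L) +
        Matrix.trace (θ₂ * θ₂ * (θb₁ * θb₁)) := by
    rw [A.pdb_trace, A.mpdb_mul_odd h2 (by simp), A.mpdb_mul_odd h2 (by simp), ← hL, e3]
    have : L * (θ₂ * θb₁) - θ₂ * (L * θb₁ - θ₂ * (θb₁ * θb₁)) =
        L * (θ₂ * θb₁) - θ₂ * L * θb₁ + θ₂ * θ₂ * (θb₁ * θb₁) := by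
      noncomm_ring
    rw [this, Matrix.trace_add, Matrix.trace_sub, c3, sub_neg_eq_add]
  have f3 : A.pdb (Matrix.trace (θ₂ * L)) = Matrix.trace (L * L) := by
    rw [A.pdb_trace, A.mpdb_mul_odd h2 (by simp), ← hL, e6, mul_zero, sub_zero]
  have main : Matrix.trace (BΘ ^ 2) =
      A.pdb (A.pd (Matrix.trace ((2 : ℂ) • (θ₂ * θb₁) + θ₂ * θb₂))) := by
    rw [Matrix.trace_add, Matrix.trace_smul, map_add, map_add, map_smul, map_smul, d1, d2,
      map_sub, f1, f2, f3, hT, hX]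
    obtain ⟨M, hM⟩ : ∃ M, M = θb₁ * θ₂ + θ₂ * θb₁ := ⟨_, rfl⟩
    rw [← hM] at c4 c5 c6 c7 c8 ⊢
    have : (U + L - M) * (U + L - M) =
        U * U + U * L - U * M + L * U + L * L - L * M - M * U - M * L + M * M := by
      noncomm_ring
    rw [this]
    simp only [Matrix.trace_add, Matrix.trace_sub]
    rw [trU, c1, c4, c5, c6, c7, c8, two_smul]
    abel
  refine ⟨main, ?_⟩
  rw [main, map_smul, map_smul]
end

section
/- (Proposition: the third Bott–Chern form) In the Cholesky setting, set Ψ = (1/2)Tr( 𝛉𝚯𝛉̄ − 𝛉̄𝚯𝛉 − (1/2)(θθ̄)² + (θ₁² + θ₂² + θ₁θ₂)θ̄₁θ̄₂ − (θ₁² + θ₂² + θ₂θ₁)θ̄₂θ̄₁ − (θ₂θ₁ − θ₁θ₂)(θ̄₁² + θ̄₂²) − θ₂θ̄₁θ₂θ̄₂ + θ₁θ̄₁θ₁θ̄₂ − θ₂θ̄₁θ₁θ̄₁ + θ₂θ̄₂θ₁θ̄₂ + (1/2)((θ₁θ̄₂)² − (θ₂θ̄₁)²) ). Then Tr(𝚯³)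 = ∂̄∂Ψ; equivalently, the third Chern character form ch₃ = (1/6)Tr(𝚯³) satisfies ch₃ = ∂̄∂ bc₃ with bc₃ = (1/6)Ψ. -/
variable {Ω : Type*} [Ring Ω] [Algebra ℂ Ω]

namespace BC3

/-! ### Formal noncommutative polynomials: words in letters
`0 = θ₁, 1 = θ₂, 2 = θ̄₁, 3 = θ̄₂, 4 = ∂̄θ₁, 5 = ∂̄θ₂`. -/

abbrev Pl := List (ℤ × List ℕ)

def sgl (l : ℕ) : ℤ := bif Nat.blt l 4 then -1 else 1

def sgw : List ℕ → ℤ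
  | [] => 1
  | l :: w => sgl l * sgw w

def rotSign (l : ℕ) (w : List ℕ) : ℤ := bif Nat.blt l 4 then sgw w else 1

def consP (z : ℤ) (l : ℕ) (p : Pl) : Pl := p.map fun a => (z * a.1, l :: a.2)

def mulP (p q : Pl) : Pl := p.flatMap fun a => q.map fun b => (a.1 * b.1, a.2 ++ b.2)

def smulP (z : ℤ) (p : Pl) : Pl := p.map fun a => (z * a.1, a.2)

def subP (p q : Pl) : Pl := p ++ smulP (-1) q

def dW (dl : ℕ → Pl) : List ℕ → Pl
  | [] => []
  | l :: w => mulP (dl l) [(1, w)] ++ consP (sgl l) l (dW dl w)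

def dP (dl : ℕ → Pl) (p : Pl) : Pl := p.flatMap fun a => smulP a.1 (dW dl a.2)

def key (w : List ℕ) : ℕ := w.foldl (fun a l => 8 * a + l) 1

def rot1 (a : ℤ × List ℕ) : ℤ × List ℕ :=
  match a.2 with
  | [] => a
  | l :: w => (a.1 * rotSign l w, w ++ [l])

def canonAux : ℕ → (ℤ × List ℕ) → (ℤ × List ℕ) → (ℤ × List ℕ)
  | 0, _, best => best
  | n + 1, cur, best =>
    canonAux n (rot1 cur) (bif Nat.blt (key cur.2) (key best.2) then cur else best)

def canon (a : ℤ × List ℕ) : ℤ × List ℕ := canonAux a.2.length a a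

def eqW : List ℕ → List ℕ → Bool
  | [], [] => true
  | a :: w, c :: v => Nat.beq a c && eqW w v
  | _, _ => false

theorem eqW_eq : ∀ {w v : List ℕ}, eqW w v = true → w = v
  | [], [], _ => rfl
  | a :: w, c :: v, h => by
    simp only [eqW, Bool.and_eq_true, Nat.beq_eq] at h
    rw [h.1, eqW_eq h.2]
  | [], _ :: _, h => by simp [eqW] at h
  | _ :: _, [], h => by simp [eqW] at h

def ins (a : ℤ × List ℕ) : Pl → Pl
  | [] => [a]
  | c :: p => bif eqW c.2 a.2 then (c.1 + a.1, c.2) :: p else c :: ins a p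

def isOne (l : ℕ) : Bool := Nat.beq l 0 || Nat.beq l 2 || Nat.beq l 4

def isTwo (l : ℕ) : Bool := Nat.beq l 1 || Nat.beq l 3 || Nat.beq l 5

def hasU : List ℕ → Bool
  | [] => false
  | l :: w => Nat.beq l 1 || hasU w

def hasUU : List ℕ → Bool
  | [] => false
  | l :: w => (Nat.beq l 1 && hasU w) || hasUU w

def kill (w : List ℕ) : Bool :=
  (w.all isOne && !w.isEmpty) || (w.all isTwo && hasUU w)

def norm : Pl → Pl
  | [] => []
  | a :: p => bif kill a.2 then norm p else ins (canon a) (norm p)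

def check (p : Pl) : Bool := (norm p).all fun a => a.1 == 0

def dl : ℕ → Pl
  | 0 => [(1, [0, 0])]
  | 1 => [(-1, [1, 1])]
  | 2 => [(-1, [4]), (1, [0, 2]), (1, [2, 0])]
  | 3 => [(-1, [5]), (-1, [1, 3]), (-1, [3, 1])]
  | 4 => [(-1, [4, 0]), (1, [0, 4])]
  | 5 => [(1, [5, 1]), (-1, [1, 5])]
  | _ => []

def dbl : ℕ → Pl
  | 0 => [(1, [4])]
  | 1 => [(1, [5])]
  | 2 => [(1, [2, 2])]
  | 3 => [(-1, [3, 3])]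
  | _ => []

def lt (l : ℕ) : Pl := [(1, [l])]

def pTh : Pl := lt 0 ++ lt 1
def pThb : Pl := lt 2 ++ lt 3
def pTT : Pl := subP (subP (lt 4 ++ lt 5) (mulP (lt 2) pTh)) (mulP pTh (lt 2))
def pTT3 : Pl := mulP (mulP pTT pTT) pTT
/-- the first part of `Ψ` -/
def pI1 : Pl := subP (mulP (mulP pTh pTT) pThb) (mulP (mulP pThb pTT) pTh)
def pI2 : Pl := mulP (mulP pTh pThb) (mulP pTh pThb)
def pI3 : Pl :=
  [(1, [0,0,2,3]), (1, [1,1,2,3]), (1, [0,1,2,3]), (-1, [0,0,3,2]), (-1, [1,1,3,2]),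
   (-1, [1,0,3,2]), (-1, [1,0,2,2]), (-1, [1,0,3,3]), (1, [0,1,2,2]), (1, [0,1,3,3]),
   (-1, [1,2,1,3]), (1, [0,2,0,3]), (-1, [1,2,0,2]), (1, [1,3,0,3])]
def pI4 : Pl := [(1, [0,3,0,3]), (-1, [1,2,1,2])]
/-- `4Ψ = Tr pPsi` -/
def pPsi : Pl := smulP 2 pI1 ++ smulP (-1) pI2 ++ smulP 2 pI3 ++ pI4

/-- `4∂Ψ = Tr pQ` -/
def pQ : Pl :=
  [(4, [4,4,1]), (4, [4,5,0]), (4, [4,5,1]), (4, [4,0,5]), (4, [4,1,5]), (4, [5,5,0]), (4,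
   [5,5,1]), (-4, [4,2,0,1]), (-2, [4,2,1,1]), (-12, [4,0,2,1]), (2, [4,0,1,3]), (-2,
   [4,0,3,1]), (-12, [4,1,2,0]), (-12, [4,1,2,1]), (-4, [4,1,0,2]), (-2, [4,1,1,2]), (-2,
   [4,1,3,0]), (-4, [4,1,3,1]), (2, [4,3,1,0]), (-2, [5,2,0,1]), (-8, [5,0,2,0]), (-10,
   [5,0,2,1]), (2, [5,0,0,3]), (4, [5,0,1,3]), (-10, [5,1,2,0]), (-12, [5,1,2,1]), (-2,
   [5,1,0,2]), (2, [5,3,0,0]), (4, [5,3,1,0]), (4, [2,2,0,1,0]), (2, [2,2,0,1,1]), (2,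
   [2,2,1,1,0]), (12, [2,0,2,0,1]), (12, [2,0,2,1,0]), (12, [2,0,2,1,1]), (12, [2,0,0,2,1]),
   (12, [2,0,1,2,1]), (12, [2,1,2,1,0]), (12, [2,1,2,1,1]), (2, [0,0,1,3,3]), (2,
   [0,0,3,3,1]), (4, [0,1,3,3,1])]

/-- cyclic normal form of `pPsi` -/
def pPsi0 : Pl :=
  [(-2, [4,2,1]), (2, [4,0,3]), (2, [4,1,2]), (2, [4,1,3]), (-2, [4,3,0]), (-2, [4,3,1]),
   (-2, [5,2,0]), (-2, [5,2,1]), (2, [5,0,2]), (2, [5,0,3]), (2, [5,1,2]), (2, [5,1,3]), (-2,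
   [5,3,0]), (-2, [5,3,1]), (2, [2,2,0,1]), (-2, [2,2,1,0]), (12, [2,0,2,1]), (-2,
   [2,0,1,3]), (4, [2,0,3,0]), (6, [2,0,3,1]), (6, [2,1,2,1]), (6, [2,1,3,0]), (8,
   [2,1,3,1]), (-2, [2,3,1,0]), (2, [0,1,3,3]), (2, [0,3,3,1])]

/-- cyclic normal form of `pTT3` -/
def pT0 : Pl :=
  [(3, [4,4,5]), (3, [4,5,5]), (1, [5,5,5]), (-3, [4,4,2,1]), (-3, [4,4,1,2]), (-3,
   [4,5,2,0]), (-3, [4,5,2,1]), (-3, [4,5,0,2]), (-3, [4,5,1,2]), (-3, [4,2,0,5]), (-3,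
   [4,2,1,5]), (-3, [4,0,2,5]), (-3, [4,1,2,5]), (-3, [5,5,2,0]), (-3, [5,5,2,1]), (-3,
   [5,5,0,2]), (-3, [5,5,1,2]), (3, [4,2,0,2,1]), (3, [4,2,0,1,2]), (3, [4,2,1,2,0]), (3,
   [4,2,1,2,1]), (3, [4,2,1,0,2]), (3, [4,2,1,1,2]), (3, [4,0,2,2,1]), (3, [4,0,2,1,2]), (3,
   [4,1,2,2,0]), (3, [4,1,2,2,1]), (3, [4,1,2,0,2]), (3, [4,1,2,1,2]), (3, [5,2,0,2,0]), (3,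
   [5,2,0,2,1]), (3, [5,2,0,0,2]), (3, [5,2,0,1,2]), (3, [5,2,1,2,0]), (3, [5,2,1,2,1]), (3,
   [5,2,1,0,2]), (3, [5,2,1,1,2]), (3, [5,0,2,2,0]), (3, [5,0,2,2,1]), (3, [5,0,2,0,2]), (3,
   [5,0,2,1,2]), (3, [5,1,2,2,0]), (3, [5,1,2,2,1]), (3, [5,1,2,0,2]), (3, [5,1,2,1,2]), (3,
   [2,2,0,2,0,1]), (3, [2,2,0,2,1,0]), (3, [2,2,0,2,1,1]), (3, [2,2,0,0,2,1]), (3,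
   [2,2,0,1,2,0]), (3, [2,2,0,1,2,1]), (3, [2,2,1,2,0,0]), (3, [2,2,1,2,0,1]), (3,
   [2,2,1,2,1,0]), (3, [2,2,1,2,1,1]), (3, [2,2,1,0,2,0]), (3, [2,2,1,0,2,1]), (3,
   [2,2,1,1,2,0]), (3, [2,2,1,1,2,1])]

theorem check_psi : check (subP pPsi pPsi0) = true := by decide +kernel

theorem check_cube : check (subP pTT3 pT0) = true := by decide +kernel

theorem check_mid : check (subP (dP dl pPsi0) pQ) = true := by decide +kernel

theorem check_final : check (subP (smulP 4 pT0) (dP dbl pQ)) = true := by decide +kernel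

section ring
variable {M : Type*} [Ring M] (e : ℕ → M)

def evW : List ℕ → M
  | [] => 1
  | l :: w => e l * evW w

def evP : Pl → M
  | [] => 0
  | a :: p => a.1 • evW e a.2 + evP p

theorem evW_append (w v : List ℕ) : evW e (w ++ v) = evW e w * evW e v := by
  induction w with
  | nil => simp [evW]
  | cons l w ih => simp [evW, ih, mul_assoc]

theorem evP_append (p q : Pl) : evP e (p ++ q) = evP e p + evP e q := by
  induction p with
  | nil => simp [evP]
  | cons a p ih => simp [evP, ih, add_assoc]

theorem evP_smul (z : ℤ) (p : Pl) : evP e (smulP z p) = z • evP e p := by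
  induction p with
  | nil => simp [evP, smulP]
  | cons a p ih =>
    simp only [smulP, List.map_cons, evP] at ih ⊢
    rw [ih, smul_add, mul_smul]

theorem evP_sub (p q : Pl) : evP e (subP p q) = evP e p - evP e q := by
  rw [subP, evP_append, evP_smul]; simp [sub_eq_add_neg]

theorem evP_cons (z : ℤ) (l : ℕ) (p : Pl) : evP e (consP z l p) = z • (e l * evP e p) := by
  induction p with
  | nil => simp [evP, consP]
  | cons a p ih =>
    simp only [consP, List.map_cons, evP, evW] at ih ⊢
    rw [ih, mul_add, smul_add, mul_smul, mul_smul_comm]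

theorem evP_mul (p q : Pl) : evP e (mulP p q) = evP e p * evP e q := by
  induction p with
  | nil => simp [evP, mulP]
  | cons a p ih =>
    simp only [mulP, List.flatMap_cons, evP] at ih ⊢
    rw [evP_append, ih, add_mul]
    congr 1
    clear ih
    induction q with
    | nil => simp [evP]
    | cons c q ih =>
      simp only [List.map_cons, evP] at ih ⊢
      rw [ih, mul_add, evW_append, smul_mul_smul_comm]

theorem evP_lt (l : ℕ) : evP e (lt l) = e l := by simp [lt, evP, evW]

theorem d_evW (d : M →+ M) (f : ℕ → Pl) (d1 : d 1 = 0)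
    (hd : ∀ l N, d (e l * N) = d (e l) * N + sgl l • (e l * d N))
    (hf : ∀ l, d (e l) = evP e (f l)) (w : List ℕ) : d (evW e w) = evP e (dW f w) := by
  induction w with
  | nil => simp [evW, dW, evP, d1]
  | cons l w ih =>
    rw [evW, hd, dW, evP_append, evP_mul, evP_cons, ih, hf]
    simp [evP]

theorem d_evP (d : M →+ M) (f : ℕ → Pl) (d1 : d 1 = 0)
    (hd : ∀ l N, d (e l * N) = d (e l) * N + sgl l • (e l * d N))
    (hf : ∀ l, d (e l) = evP e (f l)) (p : Pl) : d (evP e p) = evP e (dP f p) := by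
  induction p with
  | nil => simp [evP, dP]
  | cons a p ih =>
    simp only [dP, List.flatMap_cons, evP] at ih ⊢
    rw [evP_append, evP_smul, map_add, map_zsmul, ih, d_evW e d f d1 hd hf]

variable {N : Type*} [AddCommGroup N] (T : M →+ N)

theorem T_rot1 (hrot : ∀ l w, T (e l * evW e w) = rotSign l w • T (evW e w * e l))
    (a : ℤ × List ℕ) : (rot1 a).1 • T (evW e (rot1 a).2) = a.1 • T (evW e a.2) := by
  obtain ⟨z, w⟩ := a
  cases w with
  | nil => rfl
  | cons l w =>
    simp only [rot1, evW, hrot, evW_append, mul_smul, mul_one]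

theorem T_canonAux (hrot : ∀ l w, T (e l * evW e w) = rotSign l w • T (evW e w * e l))
    (x : N) (n : ℕ) (cur best : ℤ × List ℕ) (h1 : cur.1 • T (evW e cur.2) = x)
    (h2 : best.1 • T (evW e best.2) = x) :
    (canonAux n cur best).1 • T (evW e (canonAux n cur best).2) = x := by
  induction n generalizing cur best with
  | zero => exact h2
  | succ n ih =>
    rw [canonAux]
    apply ih
    · rw [T_rot1 e T hrot, h1]
    · cases Nat.blt (key cur.2) (key best.2) <;> assumption

theorem T_ins (a : ℤ × List ℕ) (p : Pl) :
    T (evP e (ins a p)) = a.1 • T (evW e a.2) + T (evP e p) := by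
  induction p with
  | nil => simp [ins, evP, -zsmul_eq_mul]
  | cons c p ih =>
    rw [ins]
    rcases h : eqW c.2 a.2 with _ | _
    rotate_left
    · simp only [cond_true, evP, map_add, map_zsmul, add_smul, eqW_eq h]; abel
    · simp only [cond_false, evP, map_add, map_zsmul, ih]; abel

theorem T_norm (hrot : ∀ l w, T (e l * evW e w) = rotSign l w • T (evW e w * e l))
    (hk : ∀ w, kill w = true → T (evW e w) = 0) (p : Pl) :
    T (evP e (norm p)) = T (evP e p) := by
  induction p with
  | nil => rfl
  | cons a p ih =>
    rw [norm]
    rcases h : kill a.2 with _ | _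
    rotate_left
    · simp [evP, ih, hk _ h, map_zsmul, -zsmul_eq_mul]
    · rw [cond_false, T_ins, ih, evP, map_add, map_zsmul]
      congr 1
      exact T_canonAux e T hrot _ _ _ _ rfl rfl

theorem T_check (hrot : ∀ l w, T (e l * evW e w) = rotSign l w • T (evW e w * e l))
    (hk : ∀ w, kill w = true → T (evW e w) = 0) (p : Pl) (hc : check p = true) :
    T (evP e p) = 0 := by
  rw [← T_norm e T hrot hk]
  unfold check at hc
  generalize norm p = q at hc
  induction q with
  | nil => simp [evP]
  | cons a q ih =>
    simp only [List.all_cons, Bool.and_eq_true, beq_iff_eq] at hc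
    simp [evP, hc.1, ih hc.2]

end ring
end BC3

namespace BC3
open DolbeaultAlgebra

section conc
set_option linter.unusedSectionVars false
variable {Ω : Type*} [Ring Ω] [Algebra ℂ Ω] {r : ℕ} (A : DolbeaultAlgebra Ω)

theorem pd_one : A.pd 1 = 0 := by
  have := A.pd_leibniz 1 1 A.one_mem
  simpa using this

theorem pdb_one : A.pdb 1 = 0 := by
  have := A.pdb_leibniz 1 1 A.one_mem
  simpa using this

/-- `∂` on matrices, as an additive map -/
def mD : Matrix (Fin r) (Fin r) Ω →+ Matrix (Fin r) (Fin r) Ω where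
  toFun := A.mpd
  map_zero' := by ext i j; simp [mpd]
  map_add' M N := by ext i j; simp [mpd]

/-- `∂̄` on matrices, as an additive map -/
def mDb : Matrix (Fin r) (Fin r) Ω →+ Matrix (Fin r) (Fin r) Ω where
  toFun := A.mpdb
  map_zero' := by ext i j; simp [mpdb]
  map_add' M N := by ext i j; simp [mpdb]

theorem mpd_eq (M : Matrix (Fin r) (Fin r) Ω) : A.mpd M = mD A M := rfl
theorem mpdb_eq (M : Matrix (Fin r) (Fin r) Ω) : A.mpdb M = mDb A M := rfl

theorem mD_one : mD A (1 : Matrix (Fin r) (Fin r) Ω) = 0 := by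
  ext i j
  change A.pd ((1 : Matrix (Fin r) (Fin r) Ω) i j) = 0
  by_cases hij : i = j <;> simp [Matrix.one_apply, hij, pd_one]

theorem mDb_one : mDb A (1 : Matrix (Fin r) (Fin r) Ω) = 0 := by
  ext i j
  change A.pdb ((1 : Matrix (Fin r) (Fin r) Ω) i j) = 0
  by_cases hij : i = j <;> simp [Matrix.one_apply, hij, pdb_one]

theorem mD_mD (M : Matrix (Fin r) (Fin r) Ω) : mD A (mD A M) = 0 := by
  ext i j; exact A.pd_pd _

theorem mDb_mDb (M : Matrix (Fin r) (Fin r) Ω) : mDb A (mDb A M) = 0 := by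
  ext i j; exact A.pdb_pdb _

theorem mD_mDb (M : Matrix (Fin r) (Fin r) Ω) : mD A (mDb A M) = - mDb A (mD A M) := by
  ext i j; exact eq_neg_of_add_eq_zero_left (A.pd_pdb _)

variable {A}

theorem pow_smul {V : Type*} [AddCommGroup V] [Module ℂ V] (n : ℕ) (x : V) :
    ((-1 : ℂ) ^ n) • x = ((-1 : ℤ) ^ n) • x := by
  rcases neg_one_pow_eq_or ℤ n with h | h <;> rcases Nat.even_or_odd n with h' | h' <;>
    simp [h'.neg_one_pow]

theorem mD_mul {p q : ℕ} {M : Matrix (Fin r) (Fin r) Ω} (hM : A.MatDeg p q M)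
    (N : Matrix (Fin r) (Fin r) Ω) :
    mD A (M * N) = mD A M * N + ((-1 : ℤ) ^ (p + q)) • (M * mD A N) := by
  ext i j
  rw [← pow_smul]
  simp only [mD, mpd, AddMonoidHom.coe_mk, ZeroHom.coe_mk, Matrix.map_apply, Matrix.mul_apply,
    Matrix.add_apply, Matrix.smul_apply, map_sum, Finset.smul_sum, ← Finset.sum_add_distrib]
  exact Finset.sum_congr rfl fun k _ => A.pd_leibniz _ _ (hM i k)

theorem mDb_mul {p q : ℕ} {M : Matrix (Fin r) (Fin r) Ω} (hM : A.MatDeg p q M)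
    (N : Matrix (Fin r) (Fin r) Ω) :
    mDb A (M * N) = mDb A M * N + ((-1 : ℤ) ^ (p + q)) • (M * mDb A N) := by
  ext i j
  rw [← pow_smul]
  simp only [mDb, mpdb, AddMonoidHom.coe_mk, ZeroHom.coe_mk, Matrix.map_apply, Matrix.mul_apply,
    Matrix.add_apply, Matrix.smul_apply, map_sum, Finset.smul_sum, ← Finset.sum_add_distrib]
  exact Finset.sum_congr rfl fun k _ => A.pdb_leibniz _ _ (hM i k)

theorem deg_mul {p q p' q' : ℕ} {M N : Matrix (Fin r) (Fin r) Ω} (hM : A.MatDeg p q M)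
    (hN : A.MatDeg p' q' N) : A.MatDeg (p + p') (q + q') (M * N) := fun i j => by
  rw [Matrix.mul_apply]
  exact Submodule.sum_mem _ fun k _ => A.mul_mem (hM i k) (hN k j)

theorem deg_one : A.MatDeg 0 0 (1 : Matrix (Fin r) (Fin r) Ω) := fun i j => by
  by_cases hij : i = j <;> simp [Matrix.one_apply, hij, A.one_mem]

theorem deg_D {p q : ℕ} {M : Matrix (Fin r) (Fin r) Ω} (hM : A.MatDeg p q M) :
    A.MatDeg (p + 1) q (mD A M) := fun i j => A.pd_mem (hM i j)

theorem deg_Db {p q : ℕ} {M : Matrix (Fin r) (Fin r) Ω} (hM : A.MatDeg p q M) :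
    A.MatDeg p (q + 1) (mDb A M) := fun i j => A.pdb_mem (hM i j)

theorem trace_comm {p q p' q' : ℕ} {M N : Matrix (Fin r) (Fin r) Ω} (hM : A.MatDeg p q M)
    (hN : A.MatDeg p' q' N) :
    Matrix.trace (M * N) = ((-1 : ℤ) ^ ((p + q) * (p' + q'))) • Matrix.trace (N * M) := by
  rw [← pow_smul]
  simp only [Matrix.trace, Matrix.diag, Matrix.mul_apply, Finset.smul_sum]
  rw [Finset.sum_comm]
  exact Finset.sum_congr rfl fun k _ => Finset.sum_congr rfl fun i _ =>
    A.gcomm _ _ (hM i k) (hN k i)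

variable (r) in
/-- the trace as an additive map -/
def tr : Matrix (Fin r) (Fin r) Ω →+ Ω := Matrix.traceAddMonoidHom (Fin r) Ω

theorem tr_apply (M : Matrix (Fin r) (Fin r) Ω) : tr r M = Matrix.trace M := rfl

theorem pd_tr (M : Matrix (Fin r) (Fin r) Ω) : A.pd (tr r M) = tr r (mD A M) := by
  simp [tr, mD, mpd, Matrix.trace]

theorem pdb_tr (M : Matrix (Fin r) (Fin r) Ω) : A.pdb (tr r M) = tr r (mDb A M) := by
  simp [tr, mDb, mpdb, Matrix.trace]

/-! ### triangularity -/

/-- strictly upper triangular -/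
def SU (M : Matrix (Fin r) (Fin r) Ω) : Prop := ∀ i j, j ≤ i → M i j = 0
/-- lower triangular -/
def LT (M : Matrix (Fin r) (Fin r) Ω) : Prop := ∀ i j, i < j → M i j = 0

theorem SU_mul {M N : Matrix (Fin r) (Fin r) Ω} (hM : SU M) (hN : ∀ i j, j < i → N i j = 0) :
    SU (M * N) := fun i j hij => by
  rw [Matrix.mul_apply]
  refine Finset.sum_eq_zero fun k _ => ?_
  rcases le_or_gt k i with hk | hk
  · rw [hM i k hk, zero_mul]
  · rw [hN k j (lt_of_le_of_lt hij hk), mul_zero]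

theorem LT_mul {M N : Matrix (Fin r) (Fin r) Ω} (hM : LT M) (hN : LT N) :
    LT (M * N) := fun i j hij => by
  rw [Matrix.mul_apply]
  refine Finset.sum_eq_zero fun k _ => ?_
  rcases le_or_gt k i with hk | hk
  · rw [hN k j (lt_of_le_of_lt hk hij), mul_zero]
  · rw [hM i k hk, zero_mul]

theorem LT_diag {M N : Matrix (Fin r) (Fin r) Ω} (hM : LT M) (hN : LT N) (i : Fin r) :
    (M * N) i i = M i i * N i i := by
  rw [Matrix.mul_apply]
  refine Finset.sum_eq_single i (fun k _ hk => ?_) (by simp)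
  rcases lt_or_gt_of_ne hk with hk | hk
  · rw [hN k i hk, mul_zero]
  · rw [hM i k hk, zero_mul]

theorem LT_inv {c cinv : Matrix (Fin r) (Fin r) Ω} (hc : A.MatDeg 0 0 c)
    (hci : A.MatDeg 0 0 cinv) (hl : LT c) (hinv : c * cinv = 1) : LT cinv := by
  have key : ∀ n : ℕ, ∀ i : Fin r, i.val = n → ∀ j, i < j → cinv i j = 0 := by
    intro n
    induction n using Nat.strong_induction_on with
    | _ n ih =>
      intro i hi j hij
      have row : ∀ j', i ≤ j' → (c * cinv) i j' = c i i * cinv i j' := by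
        intro j' hj'
        rw [Matrix.mul_apply]
        refine Finset.sum_eq_single i (fun k _ hk => ?_) (by simp)
        rcases lt_or_gt_of_ne hk with hk | hk
        · rw [ih k.val (hi ▸ hk) k rfl j' (lt_of_lt_of_le hk hj'), mul_zero]
        · rw [hl i k hk, zero_mul]
      have h1 := row i le_rfl
      have h2 := row j hij.le
      rw [hinv] at h1 h2
      simp only [Matrix.one_apply_eq, Matrix.one_apply_ne hij.ne] at h1 h2
      have h3 := A.gcomm _ _ (hc i i) (hci i i)
      simp only [add_zero, mul_zero, pow_zero, one_smul] at h3
      rw [h3] at h1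
      calc cinv i j = (cinv i i * c i i) * cinv i j := by rw [← h1, one_mul]
        _ = 0 := by rw [mul_assoc, ← h2, mul_zero]
  exact fun i j hij => key _ i rfl j hij

theorem UT_inv {b binv : Matrix (Fin r) (Fin r) Ω}
    (hu : ∀ i j : Fin r, j < i → b i j = 0) (hd : ∀ i, b i i = 1) (hinv : binv * b = 1) :
    ∀ i j : Fin r, j < i → binv i j = 0 := by
  have key : ∀ n : ℕ, ∀ j : Fin r, j.val = n → ∀ i, j < i → binv i j = 0 := by
    intro n
    induction n using Nat.strong_induction_on with
    | _ n ih =>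
      intro j hj i hij
      have h2 : (binv * b) i j = binv i j * b j j := by
        rw [Matrix.mul_apply]
        refine Finset.sum_eq_single j (fun k _ hk => ?_) (by simp)
        rcases lt_or_gt_of_ne hk with hk | hk
        · rw [ih k.val (hj ▸ hk) k rfl i (lt_trans hk hij), zero_mul]
        · rw [hu k j hk, mul_zero]
      rw [hinv, hd, mul_one, Matrix.one_apply_ne hij.ne'] at h2
      exact h2.symm
  exact fun i j hij => key _ j rfl i hij

/-! ### structure equations -/

theorem mD_inv {b binv : Matrix (Fin r) (Fin r) Ω} (hbi : A.MatDeg 0 0 binv)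
    (hl : binv * b = 1) (hr : b * binv = 1) : mD A binv = -(binv * mD A b * binv) := by
  have h := mD_mul hbi b
  rw [hl, mD_one] at h
  simp only [add_zero, pow_zero, one_smul] at h
  have h2 : mD A binv * b * binv = -(binv * mD A b) * binv := by
    rw [eq_neg_of_add_eq_zero_left h.symm]
  rwa [mul_assoc, hr, mul_one, neg_mul] at h2

theorem mDb_inv {b binv : Matrix (Fin r) (Fin r) Ω} (hbi : A.MatDeg 0 0 binv)
    (hl : binv * b = 1) (hr : b * binv = 1) : mDb A binv = -(binv * mDb A b * binv) := by
  have h := mDb_mul hbi b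
  rw [hl, mDb_one] at h
  simp only [add_zero, pow_zero, one_smul] at h
  have h2 : mDb A binv * b * binv = -(binv * mDb A b) * binv := by
    rw [eq_neg_of_add_eq_zero_left h.symm]
  rwa [mul_assoc, hr, mul_one, neg_mul] at h2

/-! ### words -/

/-- the interpretation of the letters -/
def letters (t u s v X Y : Matrix (Fin r) (Fin r) Ω) : ℕ → Matrix (Fin r) (Fin r) Ω
  | 0 => t
  | 1 => u
  | 2 => s
  | 3 => v
  | 4 => X
  | 5 => Y
  | _ => 0

/-- bidegree of a letter -/
def bd : ℕ → ℕ × ℕ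
  | 0 => (1, 0)
  | 1 => (1, 0)
  | 2 => (0, 1)
  | 3 => (0, 1)
  | _ => (1, 1)

theorem sgl_bd (l : ℕ) : sgl l = (-1) ^ ((bd l).1 + (bd l).2) := by
  match l with
  | 0 | 1 | 2 | 3 => rfl
  | n + 4 =>
    have : Nat.blt (n + 4) 4 = false := by
      rw [← Bool.not_eq_true, Nat.blt_eq]; omega
    simp [sgl, bd, this]

variable (e : ℕ → Matrix (Fin r) (Fin r) Ω)

theorem evW_deg (he : ∀ l, A.MatDeg (bd l).1 (bd l).2 (e l))
    (w : List ℕ) : ∃ p q, A.MatDeg p q (evW e w) ∧ sgw w = (-1) ^ (p + q) := by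
  induction w with
  | nil => exact ⟨0, 0, deg_one, rfl⟩
  | cons l w ih =>
    obtain ⟨p, q, h1, h2⟩ := ih
    refine ⟨_, _, deg_mul (he l) h1, ?_⟩
    rw [sgw, h2, sgl_bd, ← pow_add]
    congr 1
    ring

theorem hrot (he : ∀ l, A.MatDeg (bd l).1 (bd l).2 (e l))
    (l : ℕ) (w : List ℕ) :
    tr r (e l * evW e w) = rotSign l w • tr r (evW e w * e l) := by
  obtain ⟨p, q, h1, h2⟩ := evW_deg e he w
  have := trace_comm (he l) h1
  rw [tr_apply, tr_apply, this, pow_mul, ← sgl_bd]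
  congr 1
  rw [rotSign, sgl]
  cases Nat.blt l 4
  · simp
  · simp [h2]

theorem tr_conj (he : ∀ l, A.MatDeg (bd l).1 (bd l).2 (e l))
    {b binv : Matrix (Fin r) (Fin r) Ω} (hb : A.MatDeg 0 0 b)
    (hbi : A.MatDeg 0 0 binv) (h : b * binv = 1) (p : Pl) :
    tr r (binv * evP e p * b) = tr r (evP e p) := by
  induction p with
  | nil => simp [evP]
  | cons a p ih =>
    obtain ⟨m, n, h1, h2⟩ := evW_deg e he a.2
    have h3 := trace_comm (deg_mul hbi h1) hb
    simp only [evP, mul_add, add_mul, map_add, ih, mul_smul_comm, smul_mul_assoc, map_zsmul]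
    congr 2
    rw [tr_apply, tr_apply, h3, ← mul_assoc, h]
    simp

theorem hkill (he : ∀ l, A.MatDeg (bd l).1 (bd l).2 (e l))
    (h1 : ∀ l, isOne l = true → SU (e l)) (h2 : ∀ l, isTwo l = true → LT (e l))
    (w : List ℕ) (hw : kill w = true) : tr r (evW e w) = 0 := by
  simp only [kill, Bool.or_eq_true, Bool.and_eq_true] at hw
  rcases hw with ⟨hw, hne⟩ | ⟨hw, hu⟩
  · have : SU (evW e w) := by
      cases w with
      | nil => simp at hne
      | cons l w =>
        simp only [List.all_cons, Bool.and_eq_true] at hw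
        refine SU_mul (h1 l hw.1) ?_
        clear hne
        obtain ⟨_, hw⟩ := hw
        induction w with
        | nil => exact fun i j hij => Matrix.one_apply_ne hij.ne'
        | cons l w ih =>
          simp only [List.all_cons, Bool.and_eq_true] at hw
          exact fun i j hij => SU_mul (h1 l hw.1) (ih hw.2) i j hij.le
    rw [tr_apply]
    exact Finset.sum_eq_zero fun i _ => this i i le_rfl
  · have hLT : ∀ w : List ℕ, w.all isTwo = true → LT (evW e w) := by
      intro w hw
      induction w with
      | nil => exact fun i j hij => Matrix.one_apply_ne hij.ne
      | cons l w ih =>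
        simp only [List.all_cons, Bool.and_eq_true] at hw
        exact LT_mul (h2 l hw.1) (ih hw.2)
    have sq : ∀ i, e 1 i i * e 1 i i = 0 := by
      intro i
      have h := A.gcomm _ _ (he 1 i i) (he 1 i i)
      simp only [bd, add_zero, mul_one, pow_one, neg_smul, one_smul] at h
      have h' : (2 : ℂ) • (e 1 i i * e 1 i i) = 0 := by
        rw [two_smul]; exact add_eq_zero_iff_eq_neg.2 h
      simpa using h'
    have one : ∀ i, ∀ w : List ℕ, w.all isTwo = true → hasU w = true →
        e 1 i i * evW e w i i = 0 := by
      intro i w hw hu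
      induction w with
      | nil => simp [hasU] at hu
      | cons l w ih =>
        simp only [List.all_cons, Bool.and_eq_true] at hw
        simp only [hasU, Bool.or_eq_true, Nat.beq_eq] at hu
        rw [evW, LT_diag (h2 l hw.1) (hLT w hw.2), ← mul_assoc]
        rcases hu with rfl | hu
        · rw [sq, zero_mul]
        · rw [A.gcomm _ _ (he 1 i i) (he l i i), smul_mul_assoc, mul_assoc, ih hw.2 hu]
          simp
    have two : ∀ i, ∀ w : List ℕ, w.all isTwo = true → hasUU w = true → evW e w i i = 0 := by
      intro i w hw hu
      induction w with
      | nil => simp [hasUU] at hu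
      | cons l w ih =>
        simp only [List.all_cons, Bool.and_eq_true] at hw
        simp only [hasUU, Bool.or_eq_true, Bool.and_eq_true, Nat.beq_eq] at hu
        rw [evW, LT_diag (h2 l hw.1) (hLT w hw.2)]
        rcases hu with ⟨rfl, hu⟩ | hu
        · exact one i w hw.2 hu
        · rw [ih hw.2 hu, mul_zero]
    rw [tr_apply]
    exact Finset.sum_eq_zero fun i _ => two i w hw hu

theorem main_words (he : ∀ l, A.MatDeg (bd l).1 (bd l).2 (e l))
    (h1 : ∀ l, isOne l = true → SU (e l)) (h2 : ∀ l, isTwo l = true → LT (e l))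
    (hd : ∀ l, mD A (e l) = evP e (dl l)) (hdb : ∀ l, mDb A (e l) = evP e (dbl l)) :
    (4 : ℤ) • tr r (evP e pTT3) = A.pdb (A.pd (tr r (evP e pPsi))) := by
  have ck := T_check e (tr r) (hrot e he) (hkill e he h1 h2)
  have c1 := ck _ check_psi
  have c2 := ck _ check_cube
  have c3 := ck _ check_mid
  have c4 := ck _ check_final
  rw [evP_sub, map_sub, sub_eq_zero] at c1 c2 c3 c4
  rw [evP_smul, map_zsmul] at c4
  rw [c1, c2, c4, pd_tr, d_evP e (mD A) dl (mD_one A) (fun l N => ?_) hd, c3, pdb_tr,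
    d_evP e (mDb A) dbl (mDb_one A) (fun l N => ?_) hdb]
  · rw [mDb_mul (he l), sgl_bd]
  · rw [mD_mul (he l), sgl_bd]

end conc
end BC3

/-- (Proposition: the third Bott–Chern form) In the Cholesky setting, with
`Ψ = (1/2)Tr(BθBΘBθ̄ - Bθ̄BΘBθ - (1/2)(θθ̄)² + (θ₁² + θ₂² + θ₁θ₂)θ̄₁θ̄₂
  - (θ₁² + θ₂² + θ₂θ₁)θ̄₂θ̄₁ - (θ₂θ₁ - θ₁θ₂)(θ̄₁² + θ̄₂²) - θ₂θ̄₁θ₂θ̄₂ + θ₁θ̄₁θ₁θ̄₂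
  - θ₂θ̄₁θ₁θ̄₁ + θ₂θ̄₂θ₁θ̄₂ + (1/2)((θ₁θ̄₂)² - (θ₂θ̄₁)²))`,
one has `Tr(BΘ³) = ∂̄∂Ψ`; equivalently `ch₃ = (1/6)Tr(BΘ³)` satisfies `ch₃ = ∂̄∂bc₃`
with `bc₃ = (1/6)Ψ`. -/
theorem stmt19
    (A : DolbeaultAlgebra Ω) (r : ℕ) (hr : 1 ≤ r)
    (b c binv cinv : Matrix (Fin r) (Fin r) Ω)
    (hbdeg : A.MatDeg 0 0 b) (hcdeg : A.MatDeg 0 0 c)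
    (hbinvdeg : A.MatDeg 0 0 binv) (hcinvdeg : A.MatDeg 0 0 cinv)
    (hbu : ∀ i j : Fin r, j < i → b i j = 0) (hbd : ∀ i : Fin r, b i i = 1)
    (hcl : ∀ i j : Fin r, i < j → c i j = 0)
    (hbinvl : binv * b = 1) (hbinvr : b * binv = 1)
    (hcinvl : cinv * c = 1) (hcinvr : c * cinv = 1)
    (h hinv : Matrix (Fin r) (Fin r) Ω) (hh : h = c * b) (hhinv : hinv = binv * cinv)
    (θ₁ θ₂ θ θb₁ θb₂ θb : Matrix (Fin r) (Fin r) Ω)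
    (hθ₁ : θ₁ = A.mpd b * binv) (hθ₂ : θ₂ = cinv * A.mpd c) (hθ : θ = θ₁ + θ₂)
    (hθb₁ : θb₁ = A.mpdb b * binv) (hθb₂ : θb₂ = cinv * A.mpdb c) (hθb : θb = θb₁ + θb₂)
    (Bθ Bθb BΘ : Matrix (Fin r) (Fin r) Ω)
    (hBθ : Bθ = hinv * A.mpd h) (hBθb : Bθb = hinv * A.mpdb h) (hBΘ : BΘ = A.mpdb Bθ)
    (Ψ : Ω)
    (hΨ : Ψ = (1 / 2 : ℂ) • Matrix.trace
      (Bθ * BΘ * Bθb - Bθb * BΘ * Bθ - (1 / 2 : ℂ) • (θ * θb) ^ 2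
        + (θ₁ ^ 2 + θ₂ ^ 2 + θ₁ * θ₂) * θb₁ * θb₂
        - (θ₁ ^ 2 + θ₂ ^ 2 + θ₂ * θ₁) * θb₂ * θb₁
        - (θ₂ * θ₁ - θ₁ * θ₂) * (θb₁ ^ 2 + θb₂ ^ 2)
        - θ₂ * θb₁ * θ₂ * θb₂ + θ₁ * θb₁ * θ₁ * θb₂
        - θ₂ * θb₁ * θ₁ * θb₁ + θ₂ * θb₂ * θ₁ * θb₂
        + (1 / 2 : ℂ) • ((θ₁ * θb₂) ^ 2 - (θ₂ * θb₁) ^ 2))) :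
    Matrix.trace (BΘ ^ 3) = A.pdb (A.pd Ψ) ∧
    (1 / 6 : ℂ) • Matrix.trace (BΘ ^ 3) = A.pdb (A.pd ((1 / 6 : ℂ) • Ψ)) := by
  have hD : ∀ M : Matrix (Fin r) (Fin r) Ω, A.mpd M = BC3.mD A M := fun _ => rfl
  have hDb : ∀ M : Matrix (Fin r) (Fin r) Ω, A.mpdb M = BC3.mDb A M := fun _ => rfl
  simp only [hD, hDb] at *
  clear hD hDb
  -- degrees
  have dDb := BC3.deg_D hbdeg
  have dDc := BC3.deg_D hcdeg
  have dBb := BC3.deg_Db hbdeg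
  have dBc := BC3.deg_Db hcdeg
  have d0 : A.MatDeg 1 0 θ₁ := by rw [hθ₁]; exact BC3.deg_mul dDb hbinvdeg
  have d1 : A.MatDeg 1 0 θ₂ := by rw [hθ₂]; simpa using BC3.deg_mul hcinvdeg dDc
  have d2 : A.MatDeg 0 1 θb₁ := by rw [hθb₁]; exact BC3.deg_mul dBb hbinvdeg
  have d3 : A.MatDeg 0 1 θb₂ := by rw [hθb₂]; simpa using BC3.deg_mul hcinvdeg dBc
  have iDb := BC3.mD_inv hbinvdeg hbinvl hbinvr
  have iDc := BC3.mD_inv hcinvdeg hcinvl hcinvr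
  have iBb := BC3.mDb_inv hbinvdeg hbinvl hbinvr
  have iBc := BC3.mDb_inv hcinvdeg hcinvl hcinvr
  -- structure equations
  have s0 : BC3.mD A θ₁ = θ₁ * θ₁ := by
    rw [hθ₁, BC3.mD_mul dDb, BC3.mD_mD, iDb]; simp [mul_assoc]
  have s1 : BC3.mD A θ₂ = -(θ₂ * θ₂) := by
    rw [hθ₂, BC3.mD_mul hcinvdeg, BC3.mD_mD, iDc]; simp [mul_assoc]
  have s2' : BC3.mDb A θb₁ = θb₁ * θb₁ := by
    rw [hθb₁, BC3.mDb_mul dBb, BC3.mDb_mDb, iBb]; simp [mul_assoc]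
  have s3' : BC3.mDb A θb₂ = -(θb₂ * θb₂) := by
    rw [hθb₂, BC3.mDb_mul hcinvdeg, BC3.mDb_mDb, iBc]; simp [mul_assoc]
  obtain ⟨X, hX⟩ : ∃ X, X = BC3.mDb A θ₁ := ⟨_, rfl⟩
  obtain ⟨Y, hY⟩ : ∃ Y, Y = BC3.mDb A θ₂ := ⟨_, rfl⟩
  have d4 : A.MatDeg 1 1 X := by rw [hX]; exact BC3.deg_Db d0
  have d5 : A.MatDeg 1 1 Y := by rw [hY]; exact BC3.deg_Db d1
  have s2 : BC3.mD A θb₁ = -X + (θ₁ * θb₁ + θb₁ * θ₁) := by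
    rw [hX, hθ₁, hθb₁, BC3.mD_mul dBb, BC3.mDb_mul dDb, BC3.mD_mDb, iDb, iBb]
    simp [mul_assoc]
    abel
  have s3 : BC3.mD A θb₂ = -Y + (-(θ₂ * θb₂) + -(θb₂ * θ₂)) := by
    rw [hY, hθ₂, hθb₂, BC3.mD_mul hcinvdeg, BC3.mDb_mul hcinvdeg, BC3.mD_mDb, iDc, iBc]
    simp [mul_assoc]
    abel
  have s4 : BC3.mD A X = -(X * θ₁) + θ₁ * X := by
    rw [hX, BC3.mD_mDb, s0, BC3.mDb_mul d0]; simp [add_comm]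
  have s5 : BC3.mD A Y = Y * θ₂ + -(θ₂ * Y) := by
    rw [hY, BC3.mD_mDb, s1, map_neg, neg_neg, BC3.mDb_mul d1]; simp
  have s4' : BC3.mDb A X = 0 := by rw [hX, BC3.mDb_mDb]
  have s5' : BC3.mDb A Y = 0 := by rw [hY, BC3.mDb_mDb]
  -- triangularity
  have ub := BC3.UT_inv hbu hbd hbinvl
  have lc := BC3.LT_inv hcdeg hcinvdeg hcl hcinvr
  have uD : BC3.SU (BC3.mD A b) := fun i j hij => by
    change A.pd (b i j) = 0
    rcases hij.lt_or_eq with h | rfl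
    · rw [hbu i j h, map_zero]
    · rw [hbd, BC3.pd_one]
  have uB : BC3.SU (BC3.mDb A b) := fun i j hij => by
    change A.pdb (b i j) = 0
    rcases hij.lt_or_eq with h | rfl
    · rw [hbu i j h, map_zero]
    · rw [hbd, BC3.pdb_one]
  have lD : BC3.LT (BC3.mD A c) := fun i j hij => by
    change A.pd (c i j) = 0
    rw [hcl i j hij, map_zero]
  have lB : BC3.LT (BC3.mDb A c) := fun i j hij => by
    change A.pdb (c i j) = 0
    rw [hcl i j hij, map_zero]
  have u0 : BC3.SU θ₁ := by rw [hθ₁]; exact BC3.SU_mul uD ub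
  have u2 : BC3.SU θb₁ := by rw [hθb₁]; exact BC3.SU_mul uB ub
  have u4 : BC3.SU X := fun i j hij => by
    rw [hX]; change A.pdb (θ₁ i j) = 0
    rw [u0 i j hij, map_zero]
  have l1 : BC3.LT θ₂ := by rw [hθ₂]; exact BC3.LT_mul lc lD
  have l3 : BC3.LT θb₂ := by rw [hθb₂]; exact BC3.LT_mul lc lB
  have l5 : BC3.LT Y := fun i j hij => by
    rw [hY]; change A.pdb (θ₂ i j) = 0
    rw [l1 i j hij, map_zero]
  -- letters
  obtain ⟨e, hee⟩ : ∃ e, e = BC3.letters θ₁ θ₂ θb₁ θb₂ X Y := ⟨_, rfl⟩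
  have e0 : e 0 = θ₁ := by rw [hee]; rfl
  have e1 : e 1 = θ₂ := by rw [hee]; rfl
  have e2 : e 2 = θb₁ := by rw [hee]; rfl
  have e3 : e 3 = θb₂ := by rw [hee]; rfl
  have e4 : e 4 = X := by rw [hee]; rfl
  have e5 : e 5 = Y := by rw [hee]; rfl
  have e6 : ∀ n, e (n + 6) = 0 := fun n => by rw [hee]; rfl
  have he : ∀ l, A.MatDeg (BC3.bd l).1 (BC3.bd l).2 (e l) := by
    intro l
    match l with
    | 0 => rw [e0]; exact d0
    | 1 => rw [e1]; exact d1
    | 2 => rw [e2]; exact d2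
    | 3 => rw [e3]; exact d3
    | 4 => rw [e4]; exact d4
    | 5 => rw [e5]; exact d5
    | n + 6 => rw [e6]; exact fun i j => Submodule.zero_mem _
  have hmain := BC3.main_words e he
    (by
      intro l hl
      simp only [BC3.isOne, Bool.or_eq_true, Nat.beq_eq] at hl
      rcases hl with (rfl | rfl) | rfl
      · rwa [e0]
      · rwa [e2]
      · rwa [e4])
    (by
      intro l hl
      simp only [BC3.isTwo, Bool.or_eq_true, Nat.beq_eq] at hl
      rcases hl with (rfl | rfl) | rfl
      · rwa [e1]
      · rwa [e3]
      · rwa [e5])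
    (by
      intro l
      match l with
      | 0 => simp [e0, s0, BC3.dl, BC3.evP, BC3.evW]
      | 1 => simp [e1, s1, BC3.dl, BC3.evP, BC3.evW]
      | 2 => simp [e0, e2, e4, s2, BC3.dl, BC3.evP, BC3.evW]
      | 3 => simp [e1, e3, e5, s3, BC3.dl, BC3.evP, BC3.evW]
      | 4 => simp [e0, e4, s4, BC3.dl, BC3.evP, BC3.evW]
      | 5 => simp [e1, e5, s5, BC3.dl, BC3.evP, BC3.evW]
      | n + 6 => simp [e6, BC3.dl, BC3.evP])
    (by
      intro l
      match l with
      | 0 => simp [e0, e4, ← hX, BC3.dbl, BC3.evP, BC3.evW]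
      | 1 => simp [e1, e5, ← hY, BC3.dbl, BC3.evP, BC3.evW]
      | 2 => simp [e2, s2', BC3.dbl, BC3.evP, BC3.evW]
      | 3 => simp [e3, s3', BC3.dbl, BC3.evP, BC3.evW]
      | 4 => simp [e4, s4', BC3.dbl, BC3.evP, BC3.evW]
      | 5 => simp [e5, s5', BC3.dbl, BC3.evP, BC3.evW]
      | n + 6 => simp [e6, BC3.dbl, BC3.evP])
  -- conjugation
  have pth : BC3.evP e BC3.pTh = θ := by
    rw [BC3.pTh, BC3.evP_append, BC3.evP_lt, BC3.evP_lt, e0, e1, hθ]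
  have pthb : BC3.evP e BC3.pThb = θb := by
    rw [BC3.pThb, BC3.evP_append, BC3.evP_lt, BC3.evP_lt, e2, e3, hθb]
  have ptt : BC3.evP e BC3.pTT = X + Y - θb₁ * θ - θ * θb₁ := by
    simp only [BC3.pTT, BC3.evP_append, BC3.evP_sub, BC3.evP_mul, BC3.evP_lt, pth, e2, e4, e5]
  have kb : ∀ M : Matrix (Fin r) (Fin r) Ω, b * (binv * M) = M := fun M => by
    rw [← mul_assoc, hbinvr, one_mul]
  have kb' : ∀ M : Matrix (Fin r) (Fin r) Ω, binv * (b * M) = M := fun M => by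
    rw [← mul_assoc, hbinvl, one_mul]
  have kc : ∀ M : Matrix (Fin r) (Fin r) Ω, cinv * (c * M) = M := fun M => by
    rw [← mul_assoc, hcinvl, one_mul]
  have cθ : Bθ = binv * θ * b := by
    rw [hBθ, hhinv, hh, BC3.mD_mul hcdeg, hθ, hθ₁, hθ₂]
    simp only [add_zero, pow_zero, one_smul, mul_add, add_mul, mul_assoc, kc, kb, hbinvl, mul_one]
    rw [add_comm]
  have cθb : Bθb = binv * θb * b := by
    rw [hBθb, hhinv, hh, BC3.mDb_mul hcdeg, hθb, hθb₁, hθb₂]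
    simp only [add_zero, pow_zero, one_smul, mul_add, add_mul, mul_assoc, kc, kb, hbinvl, mul_one]
    rw [add_comm]
  have dθ : A.MatDeg 1 0 θ := by
    rw [hθ]; exact fun i j => Submodule.add_mem _ (d0 i j) (d1 i j)
  have bB : BC3.mDb A b = θb₁ * b := by rw [hθb₁, mul_assoc, hbinvl, mul_one]
  have iB : BC3.mDb A binv = -(binv * θb₁) := by rw [iBb, hθb₁, mul_assoc]
  have cΘ : BΘ = binv * BC3.evP e BC3.pTT * b := by
    have e : binv * θ * b = binv * (θ * b) := mul_assoc _ _ _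
    have hXY : BC3.mDb A θ = X + Y := by rw [hθ, map_add, hX, hY]
    rw [hBΘ, cθ, e, BC3.mDb_mul hbinvdeg, BC3.mDb_mul dθ, iB, bB, hXY, ptt]
    simp only [add_zero, pow_zero, pow_one, one_smul, neg_smul]
    noncomm_ring
  have tcube : Matrix.trace (BΘ ^ 3) = BC3.tr r (BC3.evP e BC3.pTT3) := by
    rw [← BC3.tr_conj e he hbdeg hbinvdeg hbinvr, BC3.tr_apply, cΘ, BC3.pTT3, BC3.evP_mul,
      BC3.evP_mul]
    simp only [pow_succ, pow_zero, one_mul, mul_assoc, kb]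
  have tI1 : Matrix.trace (Bθ * BΘ * Bθb - Bθb * BΘ * Bθ) = BC3.tr r (BC3.evP e BC3.pI1) := by
    rw [← BC3.tr_conj e he hbdeg hbinvdeg hbinvr, BC3.tr_apply, cΘ, cθ, cθb, BC3.pI1]
    simp only [BC3.evP_sub, BC3.evP_mul, pth, pthb, mul_assoc, kb, mul_sub, sub_mul]
  have tPsi : (4 : ℂ) • Ψ = BC3.tr r (BC3.evP e BC3.pPsi) := by
    have hI3 : BC3.evP e BC3.pI3 = (θ₁ ^ 2 + θ₂ ^ 2 + θ₁ * θ₂) * θb₁ * θb₂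
        - (θ₁ ^ 2 + θ₂ ^ 2 + θ₂ * θ₁) * θb₂ * θb₁
        - (θ₂ * θ₁ - θ₁ * θ₂) * (θb₁ ^ 2 + θb₂ ^ 2)
        - θ₂ * θb₁ * θ₂ * θb₂ + θ₁ * θb₁ * θ₁ * θb₂
        - θ₂ * θb₁ * θ₁ * θb₁ + θ₂ * θb₂ * θ₁ * θb₂ := by
      simp only [BC3.pI3, BC3.evP, BC3.evW, e0, e1, e2, e3, mul_one]
      noncomm_ring
    have hI4 : BC3.evP e BC3.pI4 = (θ₁ * θb₂) ^ 2 - (θ₂ * θb₁) ^ 2 := by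
      simp only [BC3.pI4, BC3.evP, BC3.evW, e0, e1, e2, e3, mul_one]
      noncomm_ring
    have hI2 : BC3.evP e BC3.pI2 = (θ * θb) ^ 2 := by
      rw [BC3.pI2, BC3.evP_mul, BC3.evP_mul, pth, pthb, sq]
    simp only [BC3.pPsi, BC3.evP_append, BC3.evP_smul, map_add, map_zsmul, ← tI1, hI2, hI4, hI3]
    simp only [BC3.tr_apply]
    rw [hΨ]
    simp only [Matrix.trace_add, Matrix.trace_sub, Matrix.trace_smul]
    module
  have first : Matrix.trace (BΘ ^ 3) = A.pdb (A.pd Ψ) := by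
    rw [← tcube, ← tPsi, map_smul, map_smul] at hmain
    have h4 : (4 : ℂ) • Matrix.trace (BΘ ^ 3) = (4 : ℂ) • A.pdb (A.pd Ψ) := by
      rw [← hmain]; module
    exact smul_right_injective Ω (by norm_num : (4 : ℂ) ≠ 0) h4
  exact ⟨first, by rw [map_smul, map_smul, first]⟩
end
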